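/- Suppose Assumption A1 holds. For each i let b_i = ∑_{j ∈ V_p} C_{ji} a_j/(1 − a_j) and d_i = ∑_{j ∈ V_p} C_{ji} (1 + 3a_j)/(4a_j). Suppose b_i ≤ a_i/(1 − a_i) + 2(n − 2)/n for all i ∈ V_p, and d_i < 1/a_i + 4/n for all i ∈ V_p. Let M = Γ_n(μ, ν) where μ_i ≤ 1/n − d_i/4 and ν_i ≥ 1/n + b_i/4 for i ∈ V_f, and μ_i = −(1 − a_i)/(4a_i), ν_i = (1 + a_i)/(4a_i) for i ∈ V_p. Then M is positively invariant under the perception dynamics with reflected appraisals (system (11)), and every trajectory of system (11) starting in M converges exponentially (there exist c > 0 and λ ∈ (0,1) with ‖p(s) − p*‖ ≤ c λ^s for all s) to the unique equilibrium p* of system (11) in Δ_n. -/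

import Mathlib

/-!
Write `w i = 1 / (1 - a i)`, call `f t = t * (1 - t)` the logistic function, and let `F` be the map
of system (11). In coordinates,
`F i = a i * p i ^ 2 + (1 - a i) * (∑ j, C j i * (a j * w j * (p j * (1 - p j))) + 1 / n)`
(`percMap_apply`).

Invariance: on the interval `[μ j, ν j]` of a partially stubborn `j` the logistic function lies between
its value at `μ j` and `1 / 4`, so the influence sum lies in `[-d i / 4, b i / 4]`
(`influence_mem_Icc`). What remains is an inequality in one variable, which the hypotheses on `b`
and `d` give.

Convergence: the logistic function satisfies `f x - f y = (x - y) * (1 - (x + y))`. As `C` is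
row-stochastic, the weighted `ℓ¹` distance `∑ i, w i * |p i - q i|` is therefore multiplied by at most
the maximum over `i` of `a i * (|t i| + |1 - t i|)` with `t = p + q` (`weighted_dist_percMap_le`). For `p`
in the box and `q = pstar` this factor is at most `(1 + a i) / 2 < 1`, because
`0 ≤ pstar i ≤ 1 / 2` for partially stubborn `i`. The upper bound is where the simplex enters (`equilibrium_le_half`): if
`pstar i > 1 / 2`, then every other coordinate is at most `1 - pstar i < 1 / 2`, so its logistic
value is at most `pstar i * (1 - pstar i)`, and the hypothesis on `b i` contradicts the
equilibrium equation.
-/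

open Matrix Finset

/-- `W(x) = diag(x) + (I - diag(x)) C`. -/
noncomputable def Wmat (n : ℕ) (C : Matrix (Fin n) (Fin n) ℝ) (x : Fin n → ℝ) :
    Matrix (Fin n) (Fin n) ℝ :=
  Matrix.diagonal x + (1 - Matrix.diagonal x) * C

/-- The map of system (11): `p ↦ (I - A) W(p)ᵀ A (I - A)⁻¹ p + (I - A) 𝟙 / n`. -/
noncomputable def percMap (n : ℕ) (C : Matrix (Fin n) (Fin n) ℝ) (a : Fin n → ℝ)
    (p : Fin n → ℝ) : Fin n → ℝ :=
  ((1 - Matrix.diagonal a) * (Wmat n C p)ᵀ * Matrix.diagonal a *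
      (1 - Matrix.diagonal a)⁻¹) *ᵥ p
    + (1 / (n : ℝ)) • ((1 - Matrix.diagonal a) *ᵥ (fun _ => (1 : ℝ)))

/-- The `n`-simplex `Δ_n`. -/
def simplex (n : ℕ) : Set (Fin n → ℝ) := {x | (∀ i, 0 ≤ x i) ∧ ∑ i, x i = 1}

/-- The box `Γ_n(y, z) = {x : y ≤ x ≤ z}`. -/
def box (n : ℕ) (y z : Fin n → ℝ) : Set (Fin n → ℝ) := {x | ∀ i, y i ≤ x i ∧ x i ≤ z i}

/-! ### The map in coordinates -/

/-- Coordinate form of the map of system (11). -/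
theorem percMap_apply (n : ℕ) (C : Matrix (Fin n) (Fin n) ℝ) (a : Fin n → ℝ)
    (ha1 : ∀ i, a i < 1) (p : Fin n → ℝ) (i : Fin n) :
    percMap n C a p i = a i * p i ^ 2 +
      (1 - a i) * (∑ j, C j i * (a j / (1 - a j) * (p j * (1 - p j))) + 1 / (n : ℝ)) := by
  have hne : ∀ j, 1 - a j ≠ 0 := fun j => by linarith [ha1 j]
  have h1 : ∀ x : Fin n → ℝ, (1 : Matrix (Fin n) (Fin n) ℝ) - diagonal x
      = diagonal (fun j => 1 - x j) := fun x => by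
    rw [← diagonal_one, diagonal_sub]
  have h2 : (diagonal (fun j => 1 - a j))⁻¹ = diagonal (fun j => (1 - a j)⁻¹) := by
    apply Matrix.inv_eq_right_inv
    rw [diagonal_mul_diagonal, ← diagonal_one]
    congr 1
    funext j
    exact mul_inv_cancel₀ (hne j)
  unfold percMap Wmat
  rw [h1, h1, h2, Pi.add_apply, Pi.smul_apply, mulVec_diagonal, smul_eq_mul]
  have h3 : ∀ j, (diagonal (fun j => 1 - a j) *
      (diagonal p + diagonal (fun j => 1 - p j) * C)ᵀ * diagonal a *
        diagonal (fun j => (1 - a j)⁻¹)) i j * p j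
      = (if i = j then a i * p i ^ 2 else 0) +
        (1 - a i) * (C j i * (a j / (1 - a j) * (p j * (1 - p j)))) := fun j => by
    rw [mul_diagonal, mul_diagonal, diagonal_mul, transpose_apply, Matrix.add_apply, diagonal_mul,
      diagonal_apply]
    by_cases hij : i = j
    · subst hij
      have := hne i
      simp only [if_true]
      field_simp
    · rw [if_neg hij, if_neg (Ne.symm hij)]
      ring
  simp only [mulVec, dotProduct]
  rw [Finset.sum_congr rfl (fun j _ => h3 j), Finset.sum_add_distrib, ← Finset.mul_sum]
  simp only [Finset.sum_ite_eq, Finset.mem_univ, if_true]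
  ring

/-! ### Bounds on the influence sum -/

theorem logistic_le_quarter (t : ℝ) : t * (1 - t) ≤ 1 / 4 := by
  nlinarith [sq_nonneg (t - 1 / 2)]

/-- Fully stubborn individuals exert no influence, so the sums over `V_p` may be taken over all
individuals. -/
theorem influence_eq_sum_filter {n : ℕ} {C : Matrix (Fin n) (Fin n) ℝ} {a : Fin n → ℝ}
    (ha0 : ∀ i, 0 ≤ a i) (i : Fin n) (f : Fin n → ℝ) :
    ∑ j, C j i * (a j / (1 - a j) * f j)
      = ∑ j ∈ Finset.univ.filter (fun j => 0 < a j), C j i * (a j / (1 - a j) * f j) := by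
  rw [Finset.sum_filter]
  refine Finset.sum_congr rfl fun j _ => ?_
  split_ifs with h
  · rfl
  · have : a j = 0 := le_antisymm (not_lt.mp h) (ha0 j)
    simp [this]

theorem influence_le {n : ℕ} {C : Matrix (Fin n) (Fin n) ℝ} {a f : Fin n → ℝ}
    (hC0 : ∀ i j, 0 ≤ C i j) (ha0 : ∀ i, 0 ≤ a i) (ha1 : ∀ i, a i < 1) (i : Fin n) {m : ℝ}
    (hf : ∀ j, 0 < a j → C j i ≠ 0 → f j ≤ m) :
    ∑ j, C j i * (a j / (1 - a j) * f j)
      ≤ (∑ j ∈ Finset.univ.filter (fun j => 0 < a j), C j i * (a j / (1 - a j))) * m := by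
  rw [influence_eq_sum_filter ha0, Finset.sum_mul]
  refine Finset.sum_le_sum fun j hj => ?_
  have hj' : 0 < a j := (Finset.mem_filter.mp hj).2
  rw [← mul_assoc]
  by_cases hc : C j i = 0
  · simp [hc]
  · exact mul_le_mul_of_nonneg_left (hf j hj' hc)
      (mul_nonneg (hC0 _ _) (div_nonneg hj'.le (by linarith [ha1 j])))

/-- Bounds for the influence sum on the box; the lower one is attained when every partially
stubborn coordinate sits at the left endpoint of its interval. -/
theorem influence_mem_Icc {n : ℕ} {C : Matrix (Fin n) (Fin n) ℝ} {a p : Fin n → ℝ}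
    (hC0 : ∀ i j, 0 ≤ C i j) (ha0 : ∀ i, 0 ≤ a i) (ha1 : ∀ i, a i < 1)
    (hp : ∀ j, 0 < a j → -((1 - a j) / (4 * a j)) ≤ p j ∧ p j ≤ (1 + a j) / (4 * a j))
    (i : Fin n) :
    ∑ j, C j i * (a j / (1 - a j) * (p j * (1 - p j))) ∈ Set.Icc
      (-(∑ j ∈ Finset.univ.filter (fun j => 0 < a j),
          C j i * ((1 + 3 * a j) / (4 * a j))) / 4)
      ((∑ j ∈ Finset.univ.filter (fun j => 0 < a j), C j i * (a j / (1 - a j))) / 4) := by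
  constructor
  · rw [influence_eq_sum_filter ha0, neg_div, Finset.sum_div, ← Finset.sum_neg_distrib]
    refine Finset.sum_le_sum fun j hj => ?_
    have hj' : 0 < a j := (Finset.mem_filter.mp hj).2
    obtain ⟨h1, h2⟩ := hp j hj'
    have h3 : 0 < 1 - a j := by linarith [ha1 j]
    have h4 : -((1 - a j) * (1 + 3 * a j) / (16 * a j ^ 2)) ≤ p j * (1 - p j) := by
      have e1 : (1 - a j) / (4 * a j) = 1 / (4 * a j) - 1 / 4 := by field_simp
      have e2 : (1 + a j) / (4 * a j) = 1 / (4 * a j) + 1 / 4 := by field_simp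
      have e3 : (1 - a j) * (1 + 3 * a j) / (16 * a j ^ 2)
          = (1 / (4 * a j) - 1 / 4) * (1 / (4 * a j) + 3 / 4) := by field_simp; ring
      rw [e1] at h1
      rw [e2] at h2
      rw [e3]
      -- the difference of the two sides is `(p j - μ j) * (1 - μ j - p j)`
      nlinarith [mul_nonneg (sub_nonneg.mpr h1)
        (show 0 ≤ 1 / (4 * a j) + 3 / 4 - p j by linarith)]
    have h5 : -((1 + 3 * a j) / (4 * a j) / 4)
        = a j / (1 - a j) * -((1 - a j) * (1 + 3 * a j) / (16 * a j ^ 2)) := by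
      field_simp
      ring
    have h6 : -((1 + 3 * a j) / (4 * a j) / 4) ≤ a j / (1 - a j) * (p j * (1 - p j)) := by
      rw [h5]
      exact mul_le_mul_of_nonneg_left h4 (div_nonneg hj'.le h3.le)
    have := mul_le_mul_of_nonneg_left h6 (hC0 j i)
    calc _ = C j i * -((1 + 3 * a j) / (4 * a j) / 4) := by ring
      _ ≤ _ := this
  · have := influence_le (f := fun j => p j * (1 - p j)) hC0 ha0 ha1 i (m := 1 / 4)
      (fun j _ _ => logistic_le_quarter (p j))
    linarith

/-! ### The equilibrium in the simplex -/

/-- At an equilibrium in the simplex, an individual that satisfies the bound on `b i` never holds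
more than half of the power. -/
theorem equilibrium_le_half {n : ℕ} (hn : 2 ≤ n) {C : Matrix (Fin n) (Fin n) ℝ}
    {a q : Fin n → ℝ} (hC0 : ∀ i j, 0 ≤ C i j) (hCdiag : ∀ i, C i i = 0)
    (ha0 : ∀ i, 0 ≤ a i) (ha1 : ∀ i, a i < 1) (hq : q ∈ simplex n)
    (hqe : percMap n C a q = q) (i : Fin n)
    (hb : ∑ j ∈ Finset.univ.filter (fun j => 0 < a j), C j i * (a j / (1 - a j))
      ≤ a i / (1 - a i) + 2 * ((n : ℝ) - 2) / n) :
    q i ≤ 1 / 2 := by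
  by_contra! hlt
  have hn' : (2 : ℝ) ≤ n := by exact_mod_cast hn
  have h3 : 0 < 1 - a i := by linarith [ha1 i]
  have hle : ∀ j, j ≠ i → q j ≤ 1 - q i := fun j hj => by
    have h := Finset.sum_le_sum_of_subset_of_nonneg (Finset.subset_univ {j, i})
      (fun k _ _ => hq.1 k)
    rw [Finset.sum_pair hj, hq.2] at h
    linarith
  have hq1 : q i ≤ 1 := by
    rw [← hq.2]
    exact Finset.single_le_sum (fun k _ => hq.1 k) (Finset.mem_univ i)
  have hS := influence_le (f := fun j => q j * (1 - q j)) hC0 ha0 ha1 i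
    (m := q i * (1 - q i)) (fun j _ hc => by
      have hji : j ≠ i := fun h => hc (h ▸ hCdiag i)
      nlinarith [hle j hji, hq.1 j])
  have hX : 0 ≤ q i * (1 - q i) := mul_nonneg (hq.1 i) (by linarith)
  have hS2 := hS.trans (mul_le_mul_of_nonneg_right hb hX)
  have he := congrFun hqe i
  rw [percMap_apply n C a ha1] at he
  set S := ∑ j, C j i * (a j / (1 - a j) * (q j * (1 - q j)))
  have he2 : q i + a i / (1 - a i) * (q i * (1 - q i)) = S + 1 / n := by
    have : q i - a i * q i ^ 2 = (1 - a i) * (S + 1 / n) := by linarith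
    have e : q i + a i / (1 - a i) * (q i * (1 - q i)) = (q i - a i * q i ^ 2) / (1 - a i) := by
      field_simp
      ring
    rw [e, this]
    field_simp
  have e4 : 2 * ((n : ℝ) - 2) / n = 2 - 4 * (1 / n) := by
    field_simp
    ring
  have h5 : (0 : ℝ) ≤ 2 - 4 * (1 / n) := by
    rw [← e4]
    exact div_nonneg (by linarith) (by linarith)
  rw [e4] at hS2
  nlinarith [mul_le_mul_of_nonneg_left (logistic_le_quarter (q i)) h5]

/-! ### Contraction in a weighted `ℓ¹` distance -/

/-- Lipschitz estimate in the weighted `ℓ¹` distance, with factor `a i * (|t| + |1 - t|)` in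
coordinate `i`, where `t = p i + q i`. -/
theorem weighted_dist_percMap_le {n : ℕ} {C : Matrix (Fin n) (Fin n) ℝ} {a : Fin n → ℝ}
    (hC0 : ∀ i j, 0 ≤ C i j) (hCrow : ∀ i, ∑ j, C i j = 1)
    (ha0 : ∀ i, 0 ≤ a i) (ha1 : ∀ i, a i < 1) (p q : Fin n → ℝ) {lam : ℝ}
    (hlam : ∀ i, a i * (|p i + q i| + |1 - (p i + q i)|) ≤ lam) :
    ∑ i, (1 - a i)⁻¹ * |percMap n C a p i - percMap n C a q i|
      ≤ lam * ∑ i, (1 - a i)⁻¹ * |p i - q i| := by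
  have hpos : ∀ i, 0 < 1 - a i := fun i => by linarith [ha1 i]
  have hterm : ∀ i, (1 - a i)⁻¹ * |percMap n C a p i - percMap n C a q i|
      ≤ (1 - a i)⁻¹ * (a i * |p i + q i| * |p i - q i|) +
        ∑ j, C j i * ((1 - a j)⁻¹ * (a j * |1 - (p j + q j)| * |p j - q j|)) := fun i => by
    have hd : percMap n C a p i - percMap n C a q i = a i * (p i + q i) * (p i - q i) +
        (1 - a i) * ∑ j, C j i * ((1 - a j)⁻¹ * (a j * (1 - (p j + q j)) * (p j - q j))) := by
      have hs : ∑ j, C j i * ((1 - a j)⁻¹ * (a j * (1 - (p j + q j)) * (p j - q j)))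
          = ∑ j, C j i * (a j / (1 - a j) * (p j * (1 - p j)))
            - ∑ j, C j i * (a j / (1 - a j) * (q j * (1 - q j))) := by
        rw [← Finset.sum_sub_distrib]
        exact Finset.sum_congr rfl fun j _ => by ring
      rw [percMap_apply n C a ha1, percMap_apply n C a ha1, hs]
      ring
    have hS : |∑ j, C j i * ((1 - a j)⁻¹ * (a j * (1 - (p j + q j)) * (p j - q j)))|
        ≤ ∑ j, C j i * ((1 - a j)⁻¹ * (a j * |1 - (p j + q j)| * |p j - q j|)) := by
      refine (Finset.abs_sum_le_sum_abs _ _).trans (le_of_eq ?_)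
      refine Finset.sum_congr rfl fun j _ => ?_
      rw [abs_mul, abs_mul, abs_mul, abs_mul, abs_of_nonneg (hC0 j i), abs_of_nonneg (ha0 j),
        abs_of_pos (inv_pos.mpr (hpos j))]
    have hA := abs_add_le (a i * (p i + q i) * (p i - q i)) ((1 - a i) *
      ∑ j, C j i * ((1 - a j)⁻¹ * (a j * (1 - (p j + q j)) * (p j - q j))))
    rw [← hd, abs_mul, abs_mul, abs_mul, abs_of_nonneg (ha0 i), abs_of_pos (hpos i)] at hA
    calc _ ≤ (1 - a i)⁻¹ * (a i * |p i + q i| * |p i - q i| + (1 - a i) *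
          ∑ j, C j i * ((1 - a j)⁻¹ * (a j * |1 - (p j + q j)| * |p j - q j|))) := by
          refine mul_le_mul_of_nonneg_left (hA.trans ?_) (inv_pos.mpr (hpos i)).le
          have := mul_le_mul_of_nonneg_left hS (hpos i).le
          linarith
      _ = _ := by rw [mul_add, inv_mul_cancel_left₀ (hpos i).ne']
  refine (Finset.sum_le_sum fun i _ => hterm i).trans ?_
  rw [Finset.sum_add_distrib, Finset.sum_comm (s := Finset.univ) (t := Finset.univ)]
  simp only [← Finset.sum_mul, hCrow, one_mul]
  rw [← Finset.sum_add_distrib, Finset.mul_sum]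
  refine Finset.sum_le_sum fun i _ => ?_
  have := mul_le_mul_of_nonneg_right (hlam i)
    (mul_nonneg (inv_pos.mpr (hpos i)).le (abs_nonneg (p i - q i)))
  linarith

/-! ### Invariance and exponential convergence -/

/-- Theorem 6(ii): invariance of `M = Γ_n(μ, ν)` and exponential
convergence of system (11) to the unique equilibrium `p*` in `Δ_n`. -/
theorem invariance_and_convergence_M
    (n : ℕ) (hn : 2 ≤ n)
    (C : Matrix (Fin n) (Fin n) ℝ)
    (hC0 : ∀ i j, 0 ≤ C i j) (hCrow : ∀ i, ∑ j, C i j = 1) (hCdiag : ∀ i, C i i = 0)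
    (a : Fin n → ℝ) (ha0 : ∀ i, 0 ≤ a i) (ha1 : ∀ i, a i < 1) (hane : a ≠ 0)
    (b d : Fin n → ℝ)
    (hb : ∀ i, b i = ∑ j ∈ Finset.univ.filter (fun j => 0 < a j), C j i * (a j / (1 - a j)))
    (hd : ∀ i, d i = ∑ j ∈ Finset.univ.filter (fun j => 0 < a j), C j i * ((1 + 3 * a j) / (4 * a j)))
    (hcondb : ∀ i, 0 < a i → b i ≤ a i / (1 - a i) + 2 * ((n : ℝ) - 2) / n)
    (hcondd : ∀ i, 0 < a i → d i < 1 / a i + 4 / (n : ℝ))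
    (μ ν : Fin n → ℝ)
    (hμf : ∀ i, a i = 0 → μ i ≤ 1 / (n : ℝ) - d i / 4)
    (hνf : ∀ i, a i = 0 → 1 / (n : ℝ) + b i / 4 ≤ ν i)
    (hμp : ∀ i, 0 < a i → μ i = -((1 - a i) / (4 * a i)))
    (hνp : ∀ i, 0 < a i → ν i = (1 + a i) / (4 * a i))
    (pstar : Fin n → ℝ) (hps : pstar ∈ simplex n) (hpe : percMap n C a pstar = pstar)
    (hpuniq : ∀ q ∈ simplex n, percMap n C a q = q → q = pstar) :
    (∀ p ∈ box n μ ν, percMap n C a p ∈ box n μ ν) ∧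
    (∀ p : ℕ → Fin n → ℝ, (∀ s, p (s + 1) = percMap n C a (p s)) → p 0 ∈ box n μ ν →
      ∃ c > 0, ∃ lam ∈ Set.Ioo (0 : ℝ) 1, ∀ s : ℕ, ‖p s - pstar‖ ≤ c * lam ^ s) := by
  have hn' : (0 : ℝ) < n := by
    have : 0 < n := by omega
    exact_mod_cast this
  have hpos : ∀ i, 0 < 1 - a i := fun i => by linarith [ha1 i]
  have hVp : ∀ p ∈ box n μ ν, ∀ j, 0 < a j →
      -((1 - a j) / (4 * a j)) ≤ p j ∧ p j ≤ (1 + a j) / (4 * a j) := fun p hp j hj => by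
    rw [← hμp j hj, ← hνp j hj]
    exact hp j
  have hinv : ∀ p ∈ box n μ ν, percMap n C a p ∈ box n μ ν := by
    intro p hp i
    have hS := influence_mem_Icc hC0 ha0 ha1 (hVp p hp) i
    rw [← hb i, ← hd i] at hS
    rw [percMap_apply n C a ha1]
    obtain ⟨hS1, hS2⟩ := hS
    set S := ∑ j, C j i * (a j / (1 - a j) * (p j * (1 - p j)))
    rcases (ha0 i).eq_or_lt with h0 | h0
    · have hm := hμf i h0.symm
      have hv := hνf i h0.symm
      rw [← h0]
      constructor <;> linarith
    · obtain ⟨hp1, hp2⟩ := hVp p hp i h0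
      have hcb := hcondb i h0
      have hcd := hcondd i h0
      have h3 := hpos i
      have e1 : (1 - a i) / (4 * a i) = (1 - a i) * (1 / a i) / 4 := by field_simp
      rw [hμp i h0, hνp i h0]
      constructor
      · have h4 : -(1 / a i / 4) ≤ S + 1 / n := by
          have : 4 / (n : ℝ) = 4 * (1 / n) := by ring
          linarith
        have h5 := mul_le_mul_of_nonneg_left h4 h3.le
        have h6 : 0 ≤ a i * p i ^ 2 := by positivity
        rw [e1]
        linarith
      · have h4 : (1 - a i) * (S + 1 / n) ≤ (2 - a i) / 4 := by
          have e2 : 2 * ((n : ℝ) - 2) / n = 2 - 4 * (1 / n) := by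
            field_simp
            ring
          have h5 : S + 1 / n ≤ a i / (1 - a i) / 4 + 1 / 2 := by linarith
          have h6 := mul_le_mul_of_nonneg_left h5 h3.le
          have e3 : (1 - a i) * (a i / (1 - a i) / 4 + 1 / 2) = (2 - a i) / 4 := by
            field_simp
            ring
          linarith
        have h7 : p i ^ 2 ≤ ((1 + a i) / (4 * a i)) ^ 2 := by
          apply sq_le_sq'
          · refine le_trans ?_ hp1
            gcongr
            linarith
          · exact hp2
        have h8 := mul_le_mul_of_nonneg_left h7 h0.le
        -- with `p i` at the right endpoint the slack is a multiple of `(1 - a i) ^ 2`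
        have e5 : (1 + a i) / (4 * a i) - a i * ((1 + a i) / (4 * a i)) ^ 2 - (2 - a i) / 4
            = 3 * (1 - a i) ^ 2 / (16 * a i) := by
          field_simp
          ring
        have h9 : 0 ≤ 3 * (1 - a i) ^ 2 / (16 * a i) := by positivity
        linarith
  refine ⟨hinv, fun p hstep hp0 => ?_⟩
  have hmem : ∀ s, p s ∈ box n μ ν := fun s => by
    induction s with
    | zero => exact hp0
    | succ k ih => rw [hstep]; exact hinv _ ih
  have : Nonempty (Fin n) := ⟨⟨0, by omega⟩⟩
  obtain ⟨m, hm⟩ := Finite.exists_max a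
  have hfac : ∀ s i, a i * (|p s i + pstar i| + |1 - (p s i + pstar i)|) ≤ (1 + a m) / 2 := by
    intro s i
    refine le_trans ?_ (show (1 + a i) / 2 ≤ (1 + a m) / 2 by linarith [hm i])
    rcases (ha0 i).eq_or_lt with h0 | h0
    · rw [← h0]
      norm_num
    · obtain ⟨h1, h2⟩ := hVp _ (hmem s) i h0
      have hhalf := equilibrium_le_half hn hC0 hCdiag ha0 ha1 hps hpe i (hb i ▸ hcondb i h0)
      have hnn := hps.1 i
      have e1 : a i * ((1 - a i) / (4 * a i)) = (1 - a i) / 4 := by field_simp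
      have e2 : a i * ((1 + a i) / (4 * a i)) = (1 + a i) / 4 := by field_simp
      have h1' := mul_le_mul_of_nonneg_left h1 h0.le
      have h2' := mul_le_mul_of_nonneg_left h2 h0.le
      have h3' := mul_le_mul_of_nonneg_left hhalf h0.le
      have h4' := mul_nonneg h0.le hnn
      have h5 := ha1 i
      rcases abs_cases (p s i + pstar i) with ⟨u, _⟩ | ⟨u, _⟩ <;>
      rcases abs_cases (1 - (p s i + pstar i)) with ⟨v, _⟩ | ⟨v, _⟩ <;>
      rw [u, v] <;> nlinarith
  set V : ℕ → ℝ := fun s => ∑ i, (1 - a i)⁻¹ * |p s i - pstar i| with hV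
  have hV0 : ∀ s, 0 ≤ V s := fun s => Finset.sum_nonneg fun i _ =>
    mul_nonneg (inv_pos.mpr (hpos i)).le (abs_nonneg _)
  have hVs : ∀ s, V (s + 1) ≤ (1 + a m) / 2 * V s := fun s => by
    have h := weighted_dist_percMap_le hC0 hCrow ha0 ha1 (p s) pstar (hfac s)
    rw [hpe, ← hstep s] at h
    exact h
  have hlam : 0 < (1 + a m) / 2 := by linarith [ha0 m]
  have hVexp : ∀ s, V s ≤ V 0 * ((1 + a m) / 2) ^ s := fun s => by
    induction s with
    | zero => simp
    | succ k ih =>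
      refine (hVs k).trans ((mul_le_mul_of_nonneg_left ih hlam.le).trans (le_of_eq ?_))
      ring
  -- `V 0 + 1` rather than `V 0`, since the constant has to be positive
  refine ⟨V 0 + 1, by linarith [hV0 0], (1 + a m) / 2, ⟨hlam, by linarith [ha1 m]⟩, fun s => ?_⟩
  have hnorm : ‖p s - pstar‖ ≤ V s := by
    refine (pi_norm_le_iff_of_nonneg (hV0 s)).mpr fun i => ?_
    have h1 : (1 : ℝ) ≤ (1 - a i)⁻¹ := (one_le_inv₀ (hpos i)).mpr (by linarith [ha0 i])
    have h2 : (1 - a i)⁻¹ * |p s i - pstar i| ≤ V s :=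
      Finset.single_le_sum (f := fun i => (1 - a i)⁻¹ * |p s i - pstar i|)
        (fun k _ => mul_nonneg (inv_pos.mpr (hpos k)).le (abs_nonneg _)) (Finset.mem_univ i)
    rw [Pi.sub_apply, Real.norm_eq_abs]
    exact (le_mul_of_one_le_left (abs_nonneg _) h1).trans h2
  have hpow : 0 ≤ ((1 + a m) / 2) ^ s := pow_nonneg hlam.le s
  linarith [hVexp s]
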